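/- arXiv:1002.4468 — 2 statements merged into one kernel-verified Lean document; each statement's English description precedes it below -/
import Mathlib

section
/- (Bailey's ₃ψ₃ summation formula.) Let q, σ, ρ, γ ∈ ℂ with 0 < |q| < 1 and |q| < |σργ|, and assume none of σ, ρ, γ, σργ equals q^m for any integer m. Then the bilateral series converges absolutely and ∑_{k=−∞}^{∞} (q/(σργ))^k · (σ;q)_k (ρ;q)_k (γ;q)_k / ((q/σ;q)_k (q/ρ;q)_k (q/γ;q)_k) = (q;q)_∞ (q/(σρ);q)_∞ (q/(σγ);q)_∞ (q/(ργ);q)_∞ / ((q/σ;q)_∞ (q/ρ;q)_∞ (q/γ;q)_∞ (q/(σργ);q)_∞). -/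
/-- The finite q-Pochhammer symbol `(a;q)_k = ∏_{i=0}^{k-1} (1 - a qⁱ)`. -/
noncomputable def qPoch (a q : ℂ) (k : ℕ) : ℂ :=
  ∏ i ∈ Finset.range k, (1 - a * q ^ i)

/-- The infinite q-Pochhammer symbol `(a;q)_∞ = ∏_{i=0}^{∞} (1 - a qⁱ)`. -/
noncomputable def qPochInf (a q : ℂ) : ℂ :=
  ∏' i : ℕ, (1 - a * q ^ i)

/-- The q-Pochhammer symbol extended to an arbitrary integer index:
`(a;q)_k = (a;q)_∞ / (a q^k;q)_∞`. -/
noncomputable def qPochInt (a q : ℂ) (k : ℤ) : ℂ :=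
  qPochInf a q / qPochInf (a * q ^ k) q

section aux
open Filter Topology

lemma qx_summable (a q : ℂ) (hq1 : ‖q‖ < 1) : Summable (fun i : ℕ => ‖-(a * q ^ i)‖) := by
  simp only [norm_neg, norm_mul, norm_pow]
  exact (summable_geometric_of_lt_one (norm_nonneg _) hq1).mul_left _

lemma qx_tendsto (a q : ℂ) (hq1 : ‖q‖ < 1) :
    Tendsto (fun n => qPoch a q n) atTop (𝓝 (qPochInf a q)) := by
  have h := (multipliable_one_add_of_summable (qx_summable a q hq1)).hasProd.tendsto_prod_nat
  simpa [qPoch, qPochInf, sub_eq_add_neg] using h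

lemma qx_ne (a q : ℂ) (hq1 : ‖q‖ < 1) (h : ∀ i : ℕ, 1 - a * q ^ i ≠ 0) : qPochInf a q ≠ 0 := by
  have := tprod_one_add_ne_zero_of_summable (f := fun i : ℕ => -(a * q ^ i))
    (by simpa [sub_eq_add_neg] using h) (qx_summable a q hq1)
  simpa [qPochInf, sub_eq_add_neg] using this

lemma qx_add (a q : ℂ) (m n : ℕ) : qPoch a q (m + n) = qPoch a q m * qPoch (a * q ^ m) q n := by
  simp [qPoch, Finset.prod_range_add, pow_add, mul_assoc]

lemma qx_inf_split (a q : ℂ) (hq1 : ‖q‖ < 1) (m : ℕ) :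
    qPochInf a q = qPoch a q m * qPochInf (a * q ^ m) q := by
  have h1 := (qx_tendsto (a * q ^ m) q hq1).const_mul (qPoch a q m)
  have h2 := (tendsto_add_atTop_iff_nat m).2 (qx_tendsto a q hq1)
  refine tendsto_nhds_unique h2 (h1.congr fun n => ?_)
  rw [add_comm, qx_add]

lemma qx_poch_ne (a q : ℂ) (h : ∀ i : ℕ, 1 - a * q ^ i ≠ 0) (n : ℕ) : qPoch a q n ≠ 0 :=
  Finset.prod_ne_zero_iff.2 fun i _ => h i

lemma qx_zero (q : ℂ) : qPochInf 0 q = 1 := by simp [qPochInf]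

lemma qx_bound (a q : ℂ) (hq1 : ‖q‖ < 1) (h : ∀ i : ℕ, 1 - a * q ^ i ≠ 0) :
    ∃ C : ℝ, 0 < C ∧ ∀ N n : ℕ, ‖(qPoch (a * q ^ N) q n)⁻¹‖ ≤ C := by
  have h1 := qx_tendsto a q hq1
  have h2 := h1.inv₀ (qx_ne a q hq1 h)
  obtain ⟨M, hM⟩ := h1.norm.bddAbove_range
  obtain ⟨M', hM'⟩ := h2.norm.bddAbove_range
  have hM1 : ∀ n, ‖qPoch a q n‖ ≤ M := fun n => hM ⟨n, rfl⟩
  have hM2 : ∀ n, ‖(qPoch a q n)⁻¹‖ ≤ M' := fun n => hM' ⟨n, rfl⟩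
  have p1 : 0 < M := lt_of_lt_of_le (norm_pos_iff.2 (qx_poch_ne a q h 0)) (hM1 0)
  have p2 : 0 < M' := lt_of_lt_of_le (norm_pos_iff.2 (inv_ne_zero (qx_poch_ne a q h 0))) (hM2 0)
  refine ⟨M * M', by positivity, fun N n => ?_⟩
  have : (qPoch (a * q ^ N) q n)⁻¹ = qPoch a q N * (qPoch a q (N + n))⁻¹ := by
    rw [qx_add, mul_inv, ← mul_assoc, mul_inv_cancel₀ (qx_poch_ne a q h N), one_mul]
  rw [this, norm_mul]
  exact mul_le_mul (hM1 _) (hM2 _) (norm_nonneg _) p1.le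

noncomputable def Ax (q x : ℂ) (n : ℕ) : ℂ :=
  ∏ i ∈ Finset.range n, (x - q ^ i) / (1 - q * x * q ^ i)

noncomputable def Bx (q x : ℂ) (n : ℕ) : ℝ :=
  ∏ i ∈ Finset.range n, (‖x‖ + ‖q‖ ^ i)

noncomputable def ex (q : ℂ) (n : ℕ) : ℂ := if n = 0 then 1 else 1 + q ^ n

noncomputable def vx (q x y z : ℂ) (n : ℕ) : ℂ := ex q n * (Ax q x n * Ax q y n * Ax q z n * q ^ n)

/-- admissible -/
def adm (q x : ℂ) : Prop := ∀ i : ℕ, 1 - q * x * q ^ i ≠ 0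

lemma adm_pow {q x : ℂ} (h : adm q x) (N : ℕ) : adm q (x * q ^ N) := fun i => by
  have := h (N + i)
  rwa [pow_add, ← mul_assoc, mul_assoc q x] at this

lemma adm_zero (q : ℂ) : adm q 0 := fun i => by simp

lemma Bx_nonneg (q x : ℂ) (n : ℕ) : 0 ≤ Bx q x n := Finset.prod_nonneg fun i _ => by positivity

lemma Bx_pos (q x : ℂ) (hq0 : 0 < ‖q‖) (n : ℕ) : 0 < Bx q x n :=
  Finset.prod_pos fun i _ => by positivity

lemma Ax_bound (q x : ℂ) (hq1 : ‖q‖ < 1) (h : adm q x) :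
    ∃ C : ℝ, 0 < C ∧ ∀ N n : ℕ, ‖Ax q (x * q ^ N) n‖ ≤ C * Bx q x n := by
  obtain ⟨C, hC, hb⟩ := qx_bound (q * x) q hq1 h
  refine ⟨C, hC, fun N n => ?_⟩
  have : Ax q (x * q ^ N) n =
      (qPoch (q * x * q ^ N) q n)⁻¹ * ∏ i ∈ Finset.range n, (x * q ^ N - q ^ i) := by
    rw [Ax, Finset.prod_div_distrib, qPoch, div_eq_mul_inv, mul_comm, mul_assoc q x]
  rw [this, norm_mul]
  refine mul_le_mul (hb N n) ?_ (norm_nonneg _) hC.le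
  rw [norm_prod, Bx]
  refine Finset.prod_le_prod (fun i _ => norm_nonneg _) fun i _ => ?_
  refine (norm_sub_le _ _).trans ?_
  rw [norm_mul, norm_pow, norm_pow]
  gcongr
  exact mul_le_of_le_one_right (norm_nonneg _) (pow_le_one₀ (norm_nonneg _) hq1.le)

lemma Bx_summable (q x y z : ℂ) (hq0 : 0 < ‖q‖) (hq1 : ‖q‖ < 1) (hc : ‖q * x * y * z‖ < 1) :
    Summable fun n => Bx q x n * Bx q y n * Bx q z n * ‖q‖ ^ n := by
  have hpos : ∀ n, 0 < Bx q x n * Bx q y n * Bx q z n * ‖q‖ ^ n := fun n => by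
    have := Bx_pos q x hq0 n
    have := Bx_pos q y hq0 n
    have := Bx_pos q z hq0 n
    positivity
  refine summable_of_ratio_test_tendsto_lt_one hc (Eventually.of_forall fun n => (hpos n).ne') ?_
  have hq : Tendsto (fun n : ℕ => ‖q‖ ^ n) atTop (𝓝 0) :=
    tendsto_pow_atTop_nhds_zero_of_lt_one (norm_nonneg _) hq1
  have := (((hq.const_add ‖x‖).mul (hq.const_add ‖y‖)).mul (hq.const_add ‖z‖)).mul_const ‖q‖
  have e : (‖x‖ + 0) * (‖y‖ + 0) * (‖z‖ + 0) * ‖q‖ = ‖q * x * y * z‖ := by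
    simp only [norm_mul]; ring
  rw [e] at this
  refine this.congr fun n => ?_
  rw [Real.norm_of_nonneg (hpos _).le, Real.norm_of_nonneg (hpos _).le, eq_div_iff (hpos n).ne']
  simp only [Bx, Finset.prod_range_succ]
  ring

lemma ex_bound (q : ℂ) (hq1 : ‖q‖ < 1) (n : ℕ) : ‖ex q n‖ ≤ 2 := by
  unfold ex
  split_ifs
  · simp
  · refine (norm_add_le _ _).trans ?_
    have : ‖q ^ n‖ ≤ 1 := by rw [norm_pow]; exact pow_le_one₀ (norm_nonneg _) hq1.le
    rw [norm_one]; linarith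

lemma vx_bound (q x y z : ℂ) (hq1 : ‖q‖ < 1) (hx : adm q x) (hy : adm q y) (hz : adm q z) :
    ∃ C : ℝ, 0 < C ∧ ∀ N n : ℕ,
      ‖Ax q (x * q ^ N) n * Ax q y n * Ax q z n * q ^ n‖ ≤
        C * (Bx q x n * Bx q y n * Bx q z n * ‖q‖ ^ n) := by
  obtain ⟨C1, h1, b1⟩ := Ax_bound q x hq1 hx
  obtain ⟨C2, h2, b2⟩ := Ax_bound q y hq1 hy
  obtain ⟨C3, h3, b3⟩ := Ax_bound q z hq1 hz
  refine ⟨C1 * C2 * C3, by positivity, fun N n => ?_⟩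
  have b2 := b2 0 n
  have b3 := b3 0 n
  have b1 := b1 N n
  rw [pow_zero, mul_one] at b2 b3
  have p1 := Bx_nonneg q x n
  have p2 := Bx_nonneg q y n
  have p3 := Bx_nonneg q z n
  rw [norm_mul, norm_mul, norm_mul, norm_pow]
  calc _ ≤ (C1 * Bx q x n) * (C2 * Bx q y n) * (C3 * Bx q z n) * ‖q‖ ^ n := by gcongr
    _ = _ := by ring

lemma ux_summable (q x y z : ℂ) (hq0 : 0 < ‖q‖) (hq1 : ‖q‖ < 1) (hc : ‖q * x * y * z‖ < 1)
    (hx : adm q x) (hy : adm q y) (hz : adm q z) :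
    Summable fun n => Ax q x n * Ax q y n * Ax q z n * q ^ n := by
  obtain ⟨C, hC, hb⟩ := vx_bound q x y z hq1 hx hy hz
  refine Summable.of_norm_bounded ((Bx_summable q x y z hq0 hq1 hc).mul_left C) fun n => ?_
  simpa using hb 0 n

lemma vx_bound2 (q x y z : ℂ) (hq1 : ‖q‖ < 1) (hx : adm q x) (hy : adm q y) (hz : adm q z) :
    ∃ C : ℝ, 0 < C ∧ ∀ N n : ℕ,
      ‖vx q (x * q ^ N) y z n‖ ≤ C * (Bx q x n * Bx q y n * Bx q z n * ‖q‖ ^ n) := by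
  obtain ⟨C, hC, hb⟩ := vx_bound q x y z hq1 hx hy hz
  refine ⟨2 * C, by positivity, fun N n => ?_⟩
  rw [vx, norm_mul, mul_assoc 2]
  exact mul_le_mul (ex_bound q hq1 n) (hb N n) (norm_nonneg _) (by norm_num)

lemma vx_summable (q x y z : ℂ) (hq0 : 0 < ‖q‖) (hq1 : ‖q‖ < 1) (hc : ‖q * x * y * z‖ < 1)
    (hx : adm q x) (hy : adm q y) (hz : adm q z) : Summable (vx q x y z) := by
  obtain ⟨C, hC, hb⟩ := vx_bound2 q x y z hq1 hx hy hz
  refine Summable.of_norm_bounded ((Bx_summable q x y z hq0 hq1 hc).mul_left C) fun n => ?_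
  simpa using hb 0 n

lemma vx_limit (q x y z : ℂ) (hq0 : 0 < ‖q‖) (hq1 : ‖q‖ < 1) (hc : ‖q * x * y * z‖ < 1)
    (hx : adm q x) (hy : adm q y) (hz : adm q z) :
    Tendsto (fun N : ℕ => ∑' n, vx q (x * q ^ N) y z n) atTop (𝓝 (∑' n, vx q 0 y z n)) := by
  obtain ⟨C, hC, hb⟩ := vx_bound2 q x y z hq1 hx hy hz
  refine tendsto_tsum_of_dominated_convergence ((Bx_summable q x y z hq0 hq1 hc).mul_left C) ?_
    (Eventually.of_forall fun N n => hb N n)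
  intro n
  have h0 : Tendsto (fun N : ℕ => x * q ^ N) atTop (𝓝 0) := by
    simpa using (tendsto_pow_atTop_nhds_zero_of_norm_lt_one hq1).const_mul x
  have hA : Tendsto (fun N : ℕ => Ax q (x * q ^ N) n) atTop (𝓝 (Ax q 0 n)) := by
    unfold Ax
    refine tendsto_finsetProd _ fun i _ => ?_
    refine (h0.sub_const _).div (((h0.const_mul q).mul_const _).const_sub 1) (by simp)
  unfold vx
  exact (((hA.mul_const _).mul_const _).mul_const _).const_mul _

lemma Ax_shift (q x : ℂ) (hx : adm q x) (n : ℕ) :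
    Ax q (x * q) (n + 1) = - q ^ n * (1 - q * x) ^ 2 * Ax q x n /
      ((1 - q * x * q ^ n) * (1 - q * x * q ^ (n + 1))) := by
  induction n with
  | zero =>
    have h0 := hx 0
    have h1 := hx 1
    simp only [pow_zero, mul_one, pow_one] at h0 h1
    have h1' : 1 - q * (x * q) ≠ 0 := by convert h1 using 1; ring
    simp [Ax]
    field_simp
    ring
  | succ n ih =>
    have h0 := hx n
    have h1 := hx (n + 1)
    have h2 := hx (n + 2)
    have h2' : 1 - q * (x * q) * q ^ (n + 1) ≠ 0 := by convert h2 using 1; ring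
    rw [Ax, Finset.prod_range_succ, ← Ax, ih, Ax, Ax, Finset.prod_range_succ]
    generalize (∏ i ∈ Finset.range n, (x - q ^ i) / (1 - q * x * q ^ i)) = P
    have e2 : 1 - q * (x * q) * q ^ (n + 1) = 1 - q * x * q ^ (n + 1 + 1) := by ring
    rw [e2]
    have h2 : 1 - q * x * q ^ (n + 1 + 1) ≠ 0 := h2
    field_simp
    ring

lemma telescope (q x y z : ℂ) (hx : adm q x) (hy : adm q y) (hz : adm q z) (n : ℕ) :
    ∑ k ∈ Finset.range (n + 1), ((1 - q * x) * (1 - q * x * y * z) * vx q x y z k -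
      (1 - q * x * y) * (1 - q * x * z) * vx q (x * q) y z k) =
    - (q * x * (1 - q * x)) * (Ax q x n * Ax q y n * Ax q z n * q ^ n) *
      ((y - q ^ n) * (z - q ^ n) / (1 - q * x * q ^ n)) := by
  induction n with
  | zero =>
    have h0 := hx 0
    simp only [pow_zero, mul_one] at h0
    simp [vx, ex, Ax]
    field_simp
    ring
  | succ n ih =>
    rw [Finset.sum_range_succ, ih]
    have h0 := hx n
    have h1 := hx (n + 1)
    have hy0 := hy n
    have hz0 := hz n
    simp only [vx, Ax_shift q x hx, ex, if_neg (Nat.succ_ne_zero n)]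
    have s : ∀ w, Ax q w (n + 1) = Ax q w n * ((w - q ^ n) / (1 - q * w * q ^ n)) := fun w => by
      rw [Ax, Finset.prod_range_succ, ← Ax]
    rw [s x, s y, s z]
    generalize Ax q x n = X
    generalize Ax q y n = Y
    generalize Ax q z n = Z
    rw [pow_succ] at *
    generalize q ^ n = Q at *
    have h1a : 1 - q ^ 2 * x * Q ≠ 0 := by convert h1 using 1; ring
    have hy1 : 1 - q * Q * y ≠ 0 := by convert hy0 using 1; ring
    have hz1 : 1 - q * Q * z ≠ 0 := by convert hz0 using 1; ring
    have h1b : 1 - q * x * (Q * q) = 1 - q ^ 2 * x * Q := by ring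
    rw [h1b]
    field_simp
    ring

lemma vx_rec (q x y z : ℂ) (hq0 : 0 < ‖q‖) (hq1 : ‖q‖ < 1) (hc : ‖q * x * y * z‖ < 1)
    (hx : adm q x) (hy : adm q y) (hz : adm q z) :
    (1 - q * x) * (1 - q * x * y * z) * ∑' n, vx q x y z n =
      (1 - q * x * y) * (1 - q * x * z) * ∑' n, vx q (x * q) y z n := by
  have hx1 : adm q (x * q) := by simpa using adm_pow hx 1
  have hc1 : ‖q * (x * q) * y * z‖ < 1 := by
    have : q * (x * q) * y * z = (q * x * y * z) * q := by ring
    rw [this, norm_mul]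
    nlinarith [norm_nonneg (q * x * y * z)]
  have s1 := (vx_summable q x y z hq0 hq1 hc hx hy hz).hasSum.mul_left
    ((1 - q * x) * (1 - q * x * y * z))
  have s2 := (vx_summable q (x * q) y z hq0 hq1 hc1 hx1 hy hz).hasSum.mul_left
    ((1 - q * x * y) * (1 - q * x * z))
  have s3 := (tendsto_add_atTop_iff_nat 1).2 (s1.sub s2).tendsto_sum_nat
  simp only [telescope q x y z hx hy hz] at s3
  have hq : Tendsto (fun n : ℕ => q ^ n) atTop (𝓝 0) :=
    tendsto_pow_atTop_nhds_zero_of_norm_lt_one hq1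
  have s4 := ((ux_summable q x y z hq0 hq1 hc hx hy hz).tendsto_atTop_zero.const_mul
    (-(q * x * (1 - q * x)))).mul
    (((hq.const_sub y).mul (hq.const_sub z)).div ((hq.const_mul (q * x)).const_sub 1) (by simp))
  have := tendsto_nhds_unique s3 s4
  rw [mul_zero, zero_mul] at this
  exact sub_eq_zero.1 this

lemma vx_iter (q x y z : ℂ) (hq0 : 0 < ‖q‖) (hq1 : ‖q‖ < 1) (hc : ‖q * x * y * z‖ < 1)
    (hx : adm q x) (hy : adm q y) (hz : adm q z) (N : ℕ) :
    qPoch (q * x) q N * qPoch (q * x * y * z) q N * ∑' n, vx q x y z n =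
      qPoch (q * x * y) q N * qPoch (q * x * z) q N * ∑' n, vx q (x * q ^ N) y z n := by
  induction N with
  | zero => simp [qPoch]
  | succ N ih =>
    have hcN : ‖q * (x * q ^ N) * y * z‖ < 1 := by
      have : q * (x * q ^ N) * y * z = (q * x * y * z) * q ^ N := by ring
      rw [this, norm_mul, norm_pow]
      exact lt_of_le_of_lt
        (mul_le_of_le_one_right (norm_nonneg _) (pow_le_one₀ (norm_nonneg _) hq1.le)) hc
    have r := vx_rec q (x * q ^ N) y z hq0 hq1 hcN (adm_pow hx N) hy hz
    have e : ∀ a, qPoch a q (N + 1) = qPoch a q N * (1 - a * q ^ N) := fun a => by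
      simp [qPoch, Finset.prod_range_succ]
    rw [e, e, e, e, pow_succ, ← mul_assoc x]
    linear_combination (1 - q * x * q ^ N) * (1 - q * x * y * z * q ^ N) * ih +
      qPoch (q * x * y) q N * qPoch (q * x * z) q N * r

lemma vx_lim (q x y z : ℂ) (hq0 : 0 < ‖q‖) (hq1 : ‖q‖ < 1) (hc : ‖q * x * y * z‖ < 1)
    (hx : adm q x) (hy : adm q y) (hz : adm q z) :
    qPochInf (q * x) q * qPochInf (q * x * y * z) q * ∑' n, vx q x y z n =
      qPochInf (q * x * y) q * qPochInf (q * x * z) q * ∑' n, vx q 0 y z n := by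
  have t := fun a => qx_tendsto a q hq1
  refine tendsto_nhds_unique (((t (q * x)).mul (t (q * x * y * z))).mul_const _) ?_
  refine (((t (q * x * y)).mul (t (q * x * z))).mul (vx_limit q x y z hq0 hq1 hc hx hy hz)).congr
    fun N => (vx_iter q x y z hq0 hq1 hc hx hy hz N).symm

lemma adm_one (q : ℂ) (hq1 : ‖q‖ < 1) : adm q 1 := fun i h => by
  have h : q ^ (i + 1) = 1 := by rw [pow_succ]; linear_combination -h
  have h2 : ‖q‖ ^ (i + 1) = 1 := by rw [← norm_pow, h, norm_one]
  exact (pow_lt_one₀ (norm_nonneg q) hq1 (Nat.succ_ne_zero i)).ne h2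

lemma vx_one (q y z : ℂ) : ∑' n, vx q 1 y z n = 1 := by
  rw [tsum_eq_single 0]
  · simp [vx, ex, Ax]
  · intro n hn
    have : Ax q 1 n = 0 :=
      Finset.prod_eq_zero (Finset.mem_range.2 (Nat.pos_of_ne_zero hn)) (by simp)
    simp [vx, this]

lemma vx_comm (q x y z : ℂ) : vx q x y z = vx q y x z := by
  funext n; simp only [vx]; ring

lemma vx_sum (q x y z : ℂ) (hq0 : 0 < ‖q‖) (hq1 : ‖q‖ < 1) (hc : ‖q * x * y * z‖ < 1)
    (hx : adm q x) (hy : adm q y) (hz : adm q z) (hne : qPochInf (q * x * y * z) q ≠ 0) :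
    ∑' n, vx q x y z n =
      qPochInf q q * qPochInf (q * x * y) q * qPochInf (q * x * z) q * qPochInf (q * y * z) q /
      (qPochInf (q * x) q * qPochInf (q * y) q * qPochInf (q * z) q * qPochInf (q * x * y * z) q)
    := by
  have h1 := vx_lim q x y z hq0 hq1 hc hx hy hz
  have h2 := vx_lim q y 0 z hq0 hq1 (by simp) hy (adm_zero q) hz
  have h3 := vx_lim q 1 0 z hq0 hq1 (by simp) (adm_one q hq1) (adm_zero q) hz
  rw [vx_one] at h3
  rw [vx_comm q y 0 z] at h2
  simp only [mul_zero, zero_mul, qx_zero, mul_one, one_mul] at h2 h3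
  have n1 : qPochInf (q * x) q ≠ 0 := qx_ne _ _ hq1 hx
  have n2 : qPochInf (q * y) q ≠ 0 := qx_ne _ _ hq1 hy
  have n3 : qPochInf (q * z) q ≠ 0 := qx_ne _ _ hq1 hz
  rw [eq_div_iff (by simp [n1, n2, n3, hne])]
  linear_combination qPochInf (q * y) q * qPochInf (q * z) q * h1 +
    qPochInf (q * x * y) q * qPochInf (q * x * z) q * (qPochInf (q * z) q * h2 -
      qPochInf (q * y * z) q * h3)

lemma int_ne {q σ : ℂ} (hq0 : q ≠ 0) (h : ∀ m : ℤ, σ ≠ q ^ m) (k : ℤ) (i : ℕ) :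
    1 - σ * q ^ k * q ^ i ≠ 0 := fun e => by
  apply h (-(k + i))
  rw [zpow_neg, zpow_add₀ hq0, zpow_natCast]
  apply eq_inv_of_mul_eq_one_left
  linear_combination -e

lemma inv_ne {q σ : ℂ} (hq0 : q ≠ 0) (h : ∀ m : ℤ, σ ≠ q ^ m) (m : ℤ) : q / σ ≠ q ^ m := fun e => by
  have hσ : σ ≠ 0 := by
    rintro rfl
    rw [div_zero] at e
    exact zpow_ne_zero m hq0 e.symm
  apply h (1 - m)
  rw [zpow_sub₀ hq0, zpow_one, ← e]
  field_simp

lemma int_nat {q σ : ℂ} (hq0 : q ≠ 0) (hq1 : ‖q‖ < 1) (h : ∀ m : ℤ, σ ≠ q ^ m) (n : ℕ) :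
    qPochInt σ q n = qPoch σ q n := by
  have := qx_ne (σ * q ^ (n : ℤ)) q hq1 (int_ne hq0 h n)
  rw [qPochInt, div_eq_iff this, zpow_natCast, ← qx_inf_split _ _ hq1]

lemma int_neg {q σ : ℂ} (hq0 : q ≠ 0) (hq1 : ‖q‖ < 1) (h : ∀ m : ℤ, σ ≠ q ^ m) (n : ℕ) :
    qPochInt σ q (-(n : ℤ)) = ∏ i ∈ Finset.range n, (1 - σ * (q ^ (i + 1))⁻¹)⁻¹ := by
  have h0 := qx_ne σ q hq1 (by simpa using int_ne hq0 h 0)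
  have e := qx_inf_split (σ * q ^ (-(n : ℤ))) q hq1 n
  have e2 : σ * q ^ (-(n : ℤ)) * q ^ n = σ := by
    rw [zpow_neg, zpow_natCast, mul_assoc, inv_mul_cancel₀ (pow_ne_zero n hq0), mul_one]
  rw [e2] at e
  rw [qPochInt, e, mul_comm, ← div_div, div_self h0, qPoch, ← Finset.prod_range_reflect,
    Finset.prod_inv_distrib, one_div]
  congr 1
  refine Finset.prod_congr rfl fun i hi => ?_
  have hi := Finset.mem_range.1 hi
  have : q ^ n = q ^ (n - 1 - i) * q ^ (i + 1) := by rw [← pow_add]; congr 1; omega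
  rw [zpow_neg, zpow_natCast, this]
  have := pow_ne_zero (n - 1 - i) hq0
  have := pow_ne_zero (i + 1) hq0
  field_simp

lemma ratio_nat {q σ : ℂ} (hq0 : q ≠ 0) (hq1 : ‖q‖ < 1) (hσ : σ ≠ 0) (h : ∀ m : ℤ, σ ≠ q ^ m)
    (n : ℕ) : qPochInt σ q n / qPochInt (q / σ) q n = σ ^ n * Ax q σ⁻¹ n := by
  rw [int_nat hq0 hq1 h, int_nat hq0 hq1 (inv_ne hq0 h), qPoch, qPoch, ← Finset.prod_div_distrib,
    Ax, Finset.pow_eq_prod_const, ← Finset.prod_mul_distrib]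
  refine Finset.prod_congr rfl fun i _ => ?_
  rw [← mul_div_assoc, mul_sub, mul_inv_cancel₀ hσ, div_eq_mul_inv q σ]

lemma ratio_neg {q σ : ℂ} (hq0 : q ≠ 0) (hq1 : ‖q‖ < 1) (hσ : σ ≠ 0) (h : ∀ m : ℤ, σ ≠ q ^ m)
    (n : ℕ) : qPochInt σ q (-(n : ℤ)) / qPochInt (q / σ) q (-(n : ℤ)) =
      (q * σ⁻¹) ^ n * Ax q σ⁻¹ n := by
  rw [int_neg hq0 hq1 h, int_neg hq0 hq1 (inv_ne hq0 h), ← Finset.prod_div_distrib,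
    Ax, Finset.pow_eq_prod_const, ← Finset.prod_mul_distrib]
  refine Finset.prod_congr rfl fun i _ => ?_
  have d1 : σ - q ^ (i + 1) ≠ 0 := fun e => h ((i + 1 : ℕ) : ℤ) (by
    rw [zpow_natCast]; exact sub_eq_zero.1 e)
  have hi := pow_ne_zero i hq0
  have d2 : 1 - σ * (q ^ (i + 1))⁻¹ = - ((σ - q ^ (i + 1)) / q ^ (i + 1)) := by
    have := pow_ne_zero (i + 1) hq0
    field_simp
    ring
  have d3 : 1 - q * σ⁻¹ * q ^ i = (σ - q ^ (i + 1)) / σ := by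
    field_simp
    ring
  rw [d2, d3, inv_neg, div_inv_eq_mul, inv_div]
  field_simp
  ring

end aux

/-- Bailey's `₃ψ₃` bilateral summation formula. -/
theorem baileys_3psi3 (q σ ρ γ : ℂ)
    (hq0 : 0 < ‖q‖) (hq1 : ‖q‖ < 1)
    (hconv : ‖q‖ < ‖σ * ρ * γ‖)
    (h : ∀ m : ℤ, σ ≠ q ^ m ∧ ρ ≠ q ^ m ∧ γ ≠ q ^ m ∧ σ * ρ * γ ≠ q ^ m) :
    Summable (fun k : ℤ => (q / (σ * ρ * γ)) ^ k *
        (qPochInt σ q k * qPochInt ρ q k * qPochInt γ q k) /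
        (qPochInt (q / σ) q k * qPochInt (q / ρ) q k * qPochInt (q / γ) q k)) ∧
    ∑' k : ℤ, (q / (σ * ρ * γ)) ^ k *
        (qPochInt σ q k * qPochInt ρ q k * qPochInt γ q k) /
        (qPochInt (q / σ) q k * qPochInt (q / ρ) q k * qPochInt (q / γ) q k)
    = qPochInf q q * qPochInf (q / (σ * ρ)) q * qPochInf (q / (σ * γ)) q *
        qPochInf (q / (ρ * γ)) q /
      (qPochInf (q / σ) q * qPochInf (q / ρ) q * qPochInf (q / γ) q *
        qPochInf (q / (σ * ρ * γ)) q) := by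
  have hq : q ≠ 0 := norm_pos_iff.1 hq0
  have hs : ∀ m : ℤ, σ ≠ q ^ m := fun m => (h m).1
  have hr : ∀ m : ℤ, ρ ≠ q ^ m := fun m => (h m).2.1
  have hg : ∀ m : ℤ, γ ≠ q ^ m := fun m => (h m).2.2.1
  have hp : ∀ m : ℤ, σ * ρ * γ ≠ q ^ m := fun m => (h m).2.2.2
  have hp0 : σ * ρ * γ ≠ 0 := norm_pos_iff.1 (hq0.trans hconv)
  have hγ0 : γ ≠ 0 := right_ne_zero_of_mul hp0
  have hρ0 : ρ ≠ 0 := right_ne_zero_of_mul (left_ne_zero_of_mul hp0)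
  have hσ0 : σ ≠ 0 := left_ne_zero_of_mul (left_ne_zero_of_mul hp0)
  have ha : ∀ w : ℂ, (∀ m : ℤ, w ≠ q ^ m) → adm q w⁻¹ := fun w hw i => by
    have := int_ne hq (inv_ne hq hw) 0 i
    rwa [zpow_zero, mul_one, div_eq_mul_inv] at this
  have ep : q * σ⁻¹ * ρ⁻¹ * γ⁻¹ = q / (σ * ρ * γ) := by field_simp
  have hc : ‖q * σ⁻¹ * ρ⁻¹ * γ⁻¹‖ < 1 := by
    rw [ep, norm_div, div_lt_one (hq0.trans hconv)]
    exact hconv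
  have hne : qPochInf (q * σ⁻¹ * ρ⁻¹ * γ⁻¹) q ≠ 0 := by
    rw [ep]
    exact qx_ne _ _ hq1 (by simpa using int_ne hq (inv_ne hq hp) 0)
  set u : ℕ → ℂ := fun n => Ax q σ⁻¹ n * Ax q ρ⁻¹ n * Ax q γ⁻¹ n * q ^ n with hu
  have su : Summable u := ux_summable q _ _ _ hq0 hq1 hc (ha σ hs) (ha ρ hr) (ha γ hg)
  have sv : Summable (vx q σ⁻¹ ρ⁻¹ γ⁻¹) :=
    vx_summable q _ _ _ hq0 hq1 hc (ha σ hs) (ha ρ hr) (ha γ hg)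
  have tot := vx_sum q σ⁻¹ ρ⁻¹ γ⁻¹ hq0 hq1 hc (ha σ hs) (ha ρ hr) (ha γ hg) hne
  have s3 : HasSum (fun n : ℕ => q ^ (n + 1) * u (n + 1))
      ((∑' n, vx q σ⁻¹ ρ⁻¹ γ⁻¹ n) - ∑' n, u n) := by
    have := (hasSum_nat_add_iff' 1).2 (sv.hasSum.sub su.hasSum)
    simp only [Finset.range_one, Finset.sum_singleton] at this
    have e0 : vx q σ⁻¹ ρ⁻¹ γ⁻¹ 0 - u 0 = 0 := by simp [vx, ex, hu]
    rw [e0, sub_zero] at this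
    refine this.congr_fun ?_
    intro n
    simp only [vx, ex, if_neg (Nat.succ_ne_zero n), hu]
    ring
  have key : HasSum (fun k : ℤ => (q / (σ * ρ * γ)) ^ k *
        (qPochInt σ q k * qPochInt ρ q k * qPochInt γ q k) /
        (qPochInt (q / σ) q k * qPochInt (q / ρ) q k * qPochInt (q / γ) q k))
      (∑' n, vx q σ⁻¹ ρ⁻¹ γ⁻¹ n) := by
    have reorg : ∀ k : ℤ, (q / (σ * ρ * γ)) ^ k *
        (qPochInt σ q k * qPochInt ρ q k * qPochInt γ q k) /
        (qPochInt (q / σ) q k * qPochInt (q / ρ) q k * qPochInt (q / γ) q k) =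
        (q / (σ * ρ * γ)) ^ k * ((qPochInt σ q k / qPochInt (q / σ) q k) *
          (qPochInt ρ q k / qPochInt (q / ρ) q k) * (qPochInt γ q k / qPochInt (q / γ) q k)) := by
      intro k
      rw [div_mul_div_comm, div_mul_div_comm, mul_div_assoc]
    simp only [reorg]
    have e1 : ∑' n, vx q σ⁻¹ ρ⁻¹ γ⁻¹ n =
      ∑' n, u n + ((∑' n, vx q σ⁻¹ ρ⁻¹ γ⁻¹ n) - ∑' n, u n) := by ring
    rw [e1]
    refine HasSum.of_nat_of_neg_add_one ?_ ?_
    · refine su.hasSum.congr_fun ?_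
      intro n
      simp only [ratio_nat hq hq1 hσ0 hs, ratio_nat hq hq1 hρ0 hr, ratio_nat hq hq1 hγ0 hg, hu]
      rw [zpow_natCast, div_pow, mul_pow, mul_pow]
      have := pow_ne_zero n hσ0
      have := pow_ne_zero n hρ0
      have := pow_ne_zero n hγ0
      field_simp
    · refine s3.congr_fun ?_
      intro n
      have en : (-((n : ℤ) + 1)) = -((n + 1 : ℕ) : ℤ) := by push_cast; ring
      rw [en]
      simp only [ratio_neg hq hq1 hσ0 hs, ratio_neg hq hq1 hρ0 hr, ratio_neg hq hq1 hγ0 hg, hu]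
      rw [zpow_neg, zpow_natCast, div_pow, mul_pow, mul_pow, mul_pow, mul_pow, mul_pow,
        inv_pow, inv_pow, inv_pow]
      have := pow_ne_zero (n + 1) hσ0
      have := pow_ne_zero (n + 1) hρ0
      have := pow_ne_zero (n + 1) hγ0
      have := pow_ne_zero (n + 1) hq
      generalize q ^ (n + 1) = Q at *
      field_simp
  refine ⟨key.summable, ?_⟩
  rw [key.tsum_eq, tot, ep]
  have f : ∀ a b : ℂ, q * a⁻¹ * b⁻¹ = q / (a * b) := fun a b => by
    rw [div_eq_mul_inv, mul_inv, mul_assoc]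
  rw [f, f, f]
  simp only [← div_eq_mul_inv]
end

section
/- (A new bilateral summation, the δ = 1 case.) Let q, σ, ρ, γ ∈ ℂ with 0 < |q| < 1 and |q²| < |σργ|, and assume none of σ, ρ, γ, σργ equals q^m for any integer m. Then the bilateral series converges absolutely and (1/(1 − q)) · ∑_{k=−∞}^{∞} (q²/(σργ))^k · (σ;q)_k (ρ;q)_k (γ;q)_k / ((q²/σ;q)_k (q²/ρ;q)_k (q²/γ;q)_k) = (q²;q)_∞ (q²/(σρ);q)_∞ (q²/(σγ);q)_∞ (q²/(ργ);q)_∞ / ((q²/σ;q)_∞ (q²/ρ;q)_∞ (q²/γ;q)_∞ (q²/(σργ);q)_∞). -/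
open Filter Topology

lemma aux_ratio {𝕜 : Type*} [NormedField 𝕜] [CompleteSpace 𝕜] (f ρ : ℕ → 𝕜) (z : 𝕜) (hz : ‖z‖ < 1)
    (hf : ∀ k, f (k + 1) = f k * ρ k) (hρ : Tendsto ρ atTop (𝓝 z)) : Summable f := by
  obtain ⟨r, hr1, hr2⟩ := exists_between hz
  refine summable_of_ratio_norm_eventually_le hr2 ?_
  have := hρ.norm.eventually (gt_mem_nhds hr1)
  filter_upwards [this] with k hk
  rw [hf, norm_mul, mul_comm]
  gcongr

lemma aux_summ (a q : ℂ) (hq : ‖q‖ < 1) : Summable (fun i : ℕ => ‖-(a * q ^ i)‖) := by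
  simp only [norm_neg, norm_mul, norm_pow]
  exact (summable_geometric_of_lt_one (norm_nonneg _) hq).mul_left _

lemma aux_mult (a q : ℂ) (hq : ‖q‖ < 1) : Multipliable (fun i : ℕ => 1 - a * q ^ i) := by
  simpa [sub_eq_add_neg] using multipliable_one_add_of_summable (aux_summ a q hq)

lemma inf_ne (a q : ℂ) (hq : ‖q‖ < 1) (h : ∀ i : ℕ, 1 - a * q ^ i ≠ 0) : qPochInf a q ≠ 0 := by
  have := tprod_one_add_ne_zero_of_summable (f := fun i : ℕ => -(a * q ^ i))
    (by simpa [sub_eq_add_neg] using h) (aux_summ a q hq)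
  simpa [qPochInf, sub_eq_add_neg] using this

lemma inf_tendsto (a q : ℂ) (hq : ‖q‖ < 1) :
    Tendsto (fun n => qPoch a q n) atTop (𝓝 (qPochInf a q)) :=
  (aux_mult a q hq).tendsto_prod_tprod_nat

lemma inf_rec (a q : ℂ) (hq : ‖q‖ < 1) : qPochInf a q = (1 - a) * qPochInf (a * q) q := by
  unfold qPochInf
  have h := aux_mult (a * q) q hq
  have e : (fun i : ℕ => 1 - a * q ^ (i + 1)) = fun i => 1 - a * q * q ^ i := by
    funext i; ring
  rw [tprod_eq_zero_mul' (by rw [e]; exact h)]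
  simp only [e]; simp

noncomputable def uu (q B C D : ℂ) (k : ℕ) : ℂ :=
  (1 - q * (q ^ k) ^ 2) * ∏ i ∈ Finset.range k,
    (q ^ 2 * (B - q ^ i) * (C - q ^ i) * (D - q ^ i) /
      ((1 - q ^ 2 * B * q ^ i) * (1 - q ^ 2 * C * q ^ i) * (1 - q ^ 2 * D * q ^ i)))

def Ok (q D : ℂ) : Prop := ∀ i : ℕ, 1 - D * q ^ (i + 1) ≠ 0

lemma Ok.two {q D : ℂ} (h : Ok q D) (i : ℕ) : 1 - q ^ 2 * D * q ^ i ≠ 0 := by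
  have := h (i + 1)
  intro h2; apply this; rw [← h2]; ring

lemma Ok.mul {q D : ℂ} (h : Ok q D) : Ok q (q * D) := by
  intro i h2; apply h (i + 1); rw [← h2]; ring

lemma Ok.mulN {q D : ℂ} (h : Ok q D) (N : ℕ) : Ok q (q ^ N * D) := by
  intro i h2; apply h (i + N); rw [← h2]; ring

lemma pow_tend {q : ℂ} (hq : ‖q‖ < 1) : Tendsto (fun k : ℕ => q ^ k) atTop (𝓝 0) :=
  tendsto_pow_atTop_nhds_zero_of_norm_lt_one hq

/-- limit of a function of `q^k` continuous at `0` -/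
lemma comp_tend {q : ℂ} (hq : ‖q‖ < 1) (g : ℂ → ℂ) (hg : ContinuousAt g 0) :
    Tendsto (fun k : ℕ => g (q ^ k)) atTop (𝓝 (g 0)) := hg.tendsto.comp (pow_tend hq)

noncomputable def ww (q B C D : ℂ) (k : ℕ) : ℂ :=
  ∏ i ∈ Finset.range k,
    (q * (B - q ^ i) * (C - q ^ i) * (q * D - q ^ i) /
      ((1 - q ^ 2 * B * q ^ i) * (1 - q ^ 2 * C * q ^ i) * (1 - q ^ 2 * D * q ^ i)))

lemma ww_summable {q B C D : ℂ} (hq : ‖q‖ < 1) (hz : ‖q ^ 2 * B * C * D‖ < 1) :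
    Summable (ww q B C D) := by
  refine aux_ratio _ _ _ hz (fun k => Finset.prod_range_succ _ _) ?_
  have := comp_tend hq (fun x => q * (B - x) * (C - x) * (q * D - x) /
      ((1 - q ^ 2 * B * x) * (1 - q ^ 2 * C * x) * (1 - q ^ 2 * D * x)))
      (by
        refine ContinuousAt.div (by fun_prop) (by fun_prop) (by simp))
  convert this using 2
  simp; ring

lemma uu_one {q B C D : ℂ} (hD : Ok q D) (k : ℕ) :
    uu q B C D k * (q * D - 1) = (1 - q * (q ^ k) ^ 2) * (q * D - q ^ k) * ww q B C D k := by
  unfold uu ww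
  induction k with
  | zero => simp; 
  | succ k ih =>
    have h1 : uu q B C D 0 = uu q B C D 0 := rfl
    have key : ∀ k : ℕ, (∏ i ∈ Finset.range k,
    (q ^ 2 * (B - q ^ i) * (C - q ^ i) * (D - q ^ i) /
      ((1 - q ^ 2 * B * q ^ i) * (1 - q ^ 2 * C * q ^ i) * (1 - q ^ 2 * D * q ^ i)))) * (q * D - 1)
       = (q * D - q ^ k) * ∏ i ∈ Finset.range k,
    (q * (B - q ^ i) * (C - q ^ i) * (q * D - q ^ i) /
      ((1 - q ^ 2 * B * q ^ i) * (1 - q ^ 2 * C * q ^ i) * (1 - q ^ 2 * D * q ^ i))) := by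
      intro k
      induction k with
      | zero => simp
      | succ k ih =>
        rw [Finset.prod_range_succ, Finset.prod_range_succ, mul_right_comm, ih]
        ring
    rw [mul_assoc, key]; ring

lemma uu_two {q B C D : ℂ} (hD : Ok q D) (k : ℕ) :
    uu q B C (q * D) k * (1 - q ^ 2 * D * q ^ k)
      = (1 - q * (q ^ k) ^ 2) * q ^ k * (1 - q ^ 2 * D) * ww q B C D k := by
  unfold uu ww
  have key : ∀ k : ℕ, (∏ i ∈ Finset.range k,
    (q ^ 2 * (B - q ^ i) * (C - q ^ i) * (q * D - q ^ i) /
      ((1 - q ^ 2 * B * q ^ i) * (1 - q ^ 2 * C * q ^ i) * (1 - q ^ 2 * (q * D) * q ^ i))))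
        * (1 - q ^ 2 * D * q ^ k)
       = q ^ k * (1 - q ^ 2 * D) * ∏ i ∈ Finset.range k,
    (q * (B - q ^ i) * (C - q ^ i) * (q * D - q ^ i) /
      ((1 - q ^ 2 * B * q ^ i) * (1 - q ^ 2 * C * q ^ i) * (1 - q ^ 2 * D * q ^ i))) := by
    intro k
    induction k with
    | zero => simp
    | succ k ih =>
      rw [Finset.prod_range_succ, Finset.prod_range_succ]
      have h1 := hD.two k
      have h2 := hD.two (k + 1)
      have h3 : 1 - q ^ 2 * (q * D) * q ^ k = 1 - q ^ 2 * D * q ^ (k + 1) := by ring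
      rw [h3]
      rw [← eq_div_iff h1] at ih
      rw [ih, pow_succ q k]
      rw [pow_succ q k] at h2
      generalize (∏ i ∈ Finset.range k, _ : ℂ) = P
      generalize q ^ k = x at *
      have e : ∀ n a b c d : ℂ, c ≠ 0 → d ≠ 0 →
        x * (1 - q ^ 2 * D) * P / c * (q ^ 2 * n / (a * b * d)) * d
          = x * q * (1 - q ^ 2 * D) * (P * (q * n / (a * b * c))) := by
        intro n a b c d hc hd
        calc _ = x * (1 - q ^ 2 * D) * P * q ^ 2 * n * (a * b * c)⁻¹ * (d * d⁻¹) := by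
              simp only [div_eq_mul_inv, mul_inv]; ring
          _ = _ := by rw [mul_inv_cancel₀ hd]; simp only [div_eq_mul_inv, mul_inv]; ring
      have := e ((B - x) * (C - x) * (q * D - x)) (1 - q ^ 2 * B * x) (1 - q ^ 2 * C * x) _ _ h1 h2
      convert this using 3
      · ring
      · ring
  rw [mul_assoc, key]; ring

lemma uu_summable {q B C D : ℂ} (hq : ‖q‖ < 1) (hD : Ok q D)
    (hz : ‖q ^ 2 * B * C * D‖ < 1) : Summable (uu q B C D) := by
  have h0 : q * D - 1 ≠ 0 := by
    have := hD 0
    intro h2; apply this; linear_combination -h2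
  have : uu q B C D = fun k => ww q B C D k *
      ((1 - q * (q ^ k) ^ 2) * (q * D - q ^ k) / (q * D - 1)) := by
    funext k
    rw [← mul_div_assoc, eq_div_iff h0, uu_one hD]; ring
  rw [this]
  refine Summable.mul_tendsto_const (c := (1 - q * 0 ^ 2) * (q * D - 0) / (q * D - 1))
    (ww_summable hq hz).norm ?_
  rw [Nat.cofinite_eq_atTop]
  exact comp_tend hq (fun x => (1 - q * x ^ 2) * (q * D - x) / (q * D - 1)) (by fun_prop)

lemma tele {q B C D : ℂ} (hB : Ok q B) (hC : Ok q C) (hD : Ok q D) (k : ℕ) :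
    (q * D - 1) * ((1 - q ^ 2 * D) * (1 - q ^ 2 * B * C * D) * uu q B C D k
      - (1 - q ^ 2 * B * D) * (1 - q ^ 2 * C * D) * uu q B C (q * D) k)
    = -((1 - q ^ 2 * D) * (1 - q ^ (k+1)) * (1 - q * B * q ^ (k+1)) * (1 - q * C * q ^ (k+1)) * (q * D)
          * ww q B C D (k + 1))
      + (1 - q ^ 2 * D) * (1 - q ^ k) * (1 - q * B * q ^ k) * (1 - q * C * q ^ k) * (q * D)
          * ww q B C D k := by
  have h1 := hB.two k
  have h2 := hC.two k
  have h3 := hD.two k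
  have e1 := uu_one (B := B) (C := C) hD k
  have e2 := uu_two (B := B) (C := C) hD k
  rw [← eq_div_iff h3] at e2
  have e3 : ww q B C D (k + 1) = ww q B C D k * _ := Finset.prod_range_succ _ _
  rw [e2, e3, mul_sub, show (q * D - 1) * ((1 - q ^ 2 * D) * (1 - q ^ 2 * B * C * D) * uu q B C D k)
    = (1 - q ^ 2 * D) * (1 - q ^ 2 * B * C * D) * (uu q B C D k * (q * D - 1)) by ring, e1, pow_succ q k]
  generalize ww q B C D k = W
  generalize q ^ k = x at *
  field_simp
  ring

lemma rec_S {q B C D : ℂ} (hq : ‖q‖ < 1) (hB : Ok q B) (hC : Ok q C) (hD : Ok q D)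
    (hz : ‖q ^ 2 * B * C * D‖ < 1) :
    (1 - q ^ 2 * D) * (1 - q ^ 2 * B * C * D) * ∑' k, uu q B C D k
      = (1 - q ^ 2 * B * D) * (1 - q ^ 2 * C * D) * ∑' k, uu q B C (q * D) k := by
  have h0 : q * D - 1 ≠ 0 := by
    have := hD 0
    intro h2; apply this; linear_combination -h2
  have hz' : ‖q ^ 2 * B * C * (q * D)‖ < 1 := by
    rw [show q ^ 2 * B * C * (q * D) = q * (q ^ 2 * B * C * D) by ring, norm_mul]
    nlinarith [norm_nonneg q, norm_nonneg (q ^ 2 * B * C * D)]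
  have s1 := (uu_summable hq hD hz).hasSum.mul_left ((1 - q ^ 2 * D) * (1 - q ^ 2 * B * C * D))
  have s2 := (uu_summable hq hD.mul hz').hasSum.mul_left ((1 - q ^ 2 * B * D) * (1 - q ^ 2 * C * D))
  have s3 := ((s1.sub s2).mul_left (q * D - 1)).tendsto_sum_nat
  simp_rw [tele hB hC hD] at s3
  have hG : Tendsto (fun k : ℕ => (1 - q ^ 2 * D) * (1 - q ^ k) * (1 - q * B * q ^ k) *
      (1 - q * C * q ^ k) * (q * D) * ww q B C D k) atTop (𝓝 0) := by
    have := (comp_tend hq (fun x => (1 - q ^ 2 * D) * (1 - x) * (1 - q * B * x) *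
      (1 - q * C * x) * (q * D)) (by fun_prop)).mul (ww_summable hq hz).tendsto_atTop_zero
    simpa using this
  have : ∀ n : ℕ, ∑ i ∈ Finset.range n, (-((1 - q ^ 2 * D) * (1 - q ^ (i+1)) * (1 - q * B * q ^ (i+1)) * (1 - q * C * q ^ (i+1)) * (q * D)
          * ww q B C D (i + 1))
      + (1 - q ^ 2 * D) * (1 - q ^ i) * (1 - q * B * q ^ i) * (1 - q * C * q ^ i) * (q * D)
          * ww q B C D i) = -((1 - q ^ 2 * D) * (1 - q ^ n) * (1 - q * B * q ^ n) *
      (1 - q * C * q ^ n) * (q * D) * ww q B C D n) := by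
    intro n
    induction n with
    | zero => simp
    | succ n ih => rw [Finset.sum_range_succ, ih]; ring
  simp_rw [this] at s3
  have := tendsto_nhds_unique s3 hG.neg
  rw [neg_zero] at this
  exact sub_eq_zero.mp ((mul_eq_zero.mp this).resolve_left h0)

lemma iter_S {q B C D : ℂ} (hq : ‖q‖ < 1) (hB : Ok q B) (hC : Ok q C) (hD : Ok q D)
    (hz : ‖q ^ 2 * B * C * D‖ < 1) (N : ℕ) :
    qPoch (q ^ 2 * D) q N * qPoch (q ^ 2 * B * C * D) q N * ∑' k, uu q B C D k
      = qPoch (q ^ 2 * B * D) q N * qPoch (q ^ 2 * C * D) q N * ∑' k, uu q B C (q ^ N * D) k := by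
  induction N with
  | zero => simp [qPoch]
  | succ N ih =>
    have hz' : ‖q ^ 2 * B * C * (q ^ N * D)‖ < 1 := by
      rw [show q ^ 2 * B * C * (q ^ N * D) = q ^ N * (q ^ 2 * B * C * D) by ring, norm_mul, norm_pow]
      have := pow_le_one₀ (n := N) (norm_nonneg q) hq.le
      have h3 : 0 ≤ ‖q‖ ^ N := by positivity
      nlinarith [norm_nonneg (q ^ 2 * B * C * D)]
    have r := rec_S hq hB hC (hD.mulN N) hz'
    rw [show q * (q ^ N * D) = q ^ (N + 1) * D by ring] at r
    simp only [qPoch, Finset.prod_range_succ] at ih ⊢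
    linear_combination ((1 - q ^ 2 * D * q ^ N) * (1 - q ^ 2 * B * C * D * q ^ N)) * ih +
      (∏ x ∈ Finset.range N, (1 - q ^ 2 * B * D * q ^ x)) *
        (∏ x ∈ Finset.range N, (1 - q ^ 2 * C * D * q ^ x)) * r

lemma limit_S {q B C D : ℂ} (hq : ‖q‖ < 1) :
    Tendsto (fun N : ℕ => ∑' k, uu q B C (q ^ N * D) k) atTop (𝓝 (∑' k, uu q B C 0 k)) := by
  set K : ℝ := ‖q ^ 2 * B * C‖ with hK
  have hK0 : 0 ≤ K := norm_nonneg _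
  set ε : ℝ := 1 / (K + 2) with hε
  have hε0 : 0 < ε := by positivity
  have hε1 : ε < 1 := by rw [hε, div_lt_one (by positivity)]; linarith
  have hw : Tendsto (fun N : ℕ => q ^ N * D) atTop (𝓝 0) := by
    simpa using (pow_tend hq).mul_const D
  have hsmall : ∀ᶠ N : ℕ in atTop, ‖q ^ N * D‖ < ε := by
    have := hw.norm
    rw [norm_zero] at this
    exact this.eventually (gt_mem_nhds hε0)
  set bd : ℕ → ℝ := fun k => 2 * ∏ i ∈ Finset.range k,
    (‖q ^ 2 * (B - q ^ i) * (C - q ^ i) / ((1 - q ^ 2 * B * q ^ i) * (1 - q ^ 2 * C * q ^ i))‖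
      * ((ε + ‖q ^ i‖) / (1 - ε))) with hbd
  have hbs : Summable bd := by
    refine aux_ratio bd _ (K * (ε / (1 - ε))) ?_
      (fun k => by rw [hbd]; simp only [Finset.prod_range_succ]; rw [← mul_assoc]) ?_
    · have : ε / (1 - ε) = 1 / (K + 1) := by
        rw [hε]
        have : K + 2 - 1 ≠ 0 := by linarith
        have : K + 1 ≠ 0 := by linarith
        field_simp
        ring
      rw [this, Real.norm_eq_abs, abs_of_nonneg (by positivity), mul_one_div, div_lt_one (by positivity)]
      linarith
    · refine Tendsto.mul ?_ ?_
      · have := (comp_tend hq (fun x => q ^ 2 * (B - x) * (C - x) /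
          ((1 - q ^ 2 * B * x) * (1 - q ^ 2 * C * x)))
          (ContinuousAt.div (by fun_prop) (by fun_prop) (by simp))).norm
        convert this using 2
        simp [hK]
      · have := (pow_tend hq).norm
        have := (this.const_add ε).div_const (1 - ε)
        simpa using this
  refine tendsto_tsum_of_dominated_convergence hbs ?_ ?_
  · intro k
    refine Tendsto.const_mul _ (tendsto_finsetProd _ fun i _ => ?_)
    have hc : ContinuousAt (fun w : ℂ => q ^ 2 * (B - q ^ i) * (C - q ^ i) * (w - q ^ i) *
      (((1 - q ^ 2 * B * q ^ i) * (1 - q ^ 2 * C * q ^ i))⁻¹ / (1 - q ^ 2 * w * q ^ i))) 0 := by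
      refine ContinuousAt.mul (by fun_prop) (ContinuousAt.div (by fun_prop) (by fun_prop) (by simp))
    have := hc.tendsto.comp hw
    convert this using 2
    · simp only [Function.comp, div_eq_mul_inv, mul_inv]; try ring
    · simp only [div_eq_mul_inv, mul_inv]; try ring
  · filter_upwards [hsmall] with N hN k
    generalize q ^ N * D = w at hN
    have hp : ∀ i : ℕ, ‖q ^ i‖ ≤ 1 := fun i => by
      rw [norm_pow]; exact pow_le_one₀ (norm_nonneg _) hq.le
    unfold uu
    rw [norm_mul, hbd]
    refine mul_le_mul ?_ ?_ (norm_nonneg _) (by norm_num)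
    · calc _ ≤ ‖(1:ℂ)‖ + ‖q * (q ^ k) ^ 2‖ := norm_sub_le _ _
        _ ≤ 1 + 1 := by
          rw [norm_one]
          gcongr
          rw [show q * (q ^ k) ^ 2 = q ^ (2 * k + 1) by ring]
          exact hp _
        _ = 2 := by norm_num
    · rw [norm_prod]
      refine Finset.prod_le_prod (fun _ _ => norm_nonneg _) fun i _ => ?_
      rw [show q ^ 2 * (B - q ^ i) * (C - q ^ i) * (w - q ^ i) /
      ((1 - q ^ 2 * B * q ^ i) * (1 - q ^ 2 * C * q ^ i) * (1 - q ^ 2 * w * q ^ i)) =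
       q ^ 2 * (B - q ^ i) * (C - q ^ i) / ((1 - q ^ 2 * B * q ^ i) * (1 - q ^ 2 * C * q ^ i)) *
        ((w - q ^ i) / (1 - q ^ 2 * w * q ^ i)) by
          simp only [div_eq_mul_inv, mul_inv]; ring, norm_mul]
      refine mul_le_mul_of_nonneg_left ?_ (norm_nonneg _)
      rw [norm_div]
      refine div_le_div₀ (by positivity) ?_ (by linarith) ?_
      · calc _ ≤ ‖w‖ + ‖q ^ i‖ := norm_sub_le _ _
          _ ≤ _ := by gcongr
      · have h1 : ‖q ^ 2 * w * q ^ i‖ ≤ ε := by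
          rw [show q ^ 2 * w * q ^ i = q ^ (i + 2) * w by ring, norm_mul]
          nlinarith [hp (i + 2), norm_nonneg w, norm_nonneg (q ^ (i + 2))]
        have h2 := norm_sub_norm_le (1:ℂ) (q ^ 2 * w * q ^ i)
        rw [norm_one] at h2
        linarith

lemma S_inf {q B C D : ℂ} (hq : ‖q‖ < 1) (hB : Ok q B) (hC : Ok q C) (hD : Ok q D)
    (hz : ‖q ^ 2 * B * C * D‖ < 1) :
    qPochInf (q ^ 2 * D) q * qPochInf (q ^ 2 * B * C * D) q * ∑' k, uu q B C D k
      = qPochInf (q ^ 2 * B * D) q * qPochInf (q ^ 2 * C * D) q * ∑' k, uu q B C 0 k := by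
  have h1 := ((inf_tendsto (q ^ 2 * D) q hq).mul (inf_tendsto (q ^ 2 * B * C * D) q hq)).mul_const
    (∑' k, uu q B C D k)
  have h2 := ((inf_tendsto (q ^ 2 * B * D) q hq).mul (inf_tendsto (q ^ 2 * C * D) q hq)).mul
    (limit_S (B := B) (C := C) (D := D) hq)
  refine tendsto_nhds_unique h1 (h2.congr fun N => (iter_S hq hB hC hD hz N).symm)

lemma S_one (q B C : ℂ) : ∑' k, uu q B C 1 k = 1 - q := by
  rw [tsum_eq_single 0]
  · simp [uu]
  · intro k hk
    unfold uu
    rw [Finset.prod_eq_zero (i := 0) (by simp; omega) (by simp), mul_zero]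

def FF (q B C D : ℂ) : Prop :=
  qPochInf (q ^ 2 * B) q * qPochInf (q ^ 2 * C) q * qPochInf (q ^ 2 * D) q *
    qPochInf (q ^ 2 * B * C * D) q * ∑' k, uu q B C D k =
  (1 - q) * qPochInf (q ^ 2) q * qPochInf (q ^ 2 * B * C) q * qPochInf (q ^ 2 * B * D) q *
    qPochInf (q ^ 2 * C * D) q

lemma FF_symm {q B C D : ℂ} (h : FF q B C D) : FF q D C B := by
  unfold FF at *
  have : uu q D C B = uu q B C D := by
    funext k; unfold uu; congr 1; refine Finset.prod_congr rfl fun i _ => ?_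
    congr 1 <;> ring
  rw [this, show q ^ 2 * D * C * B = q ^ 2 * B * C * D by ring,
    show q ^ 2 * D * C = q ^ 2 * C * D by ring, show q ^ 2 * D * B = q ^ 2 * B * D by ring,
    show q ^ 2 * C * B = q ^ 2 * B * C by ring]
  linear_combination h

lemma Ok_one {q : ℂ} (hq : ‖q‖ < 1) : Ok q 1 := by
  intro i h
  have h1 : q ^ (i + 1) = 1 := by linear_combination -h
  have h2 := congrArg norm h1
  rw [norm_pow, norm_one] at h2
  exact absurd h2 (pow_lt_one₀ (norm_nonneg _) hq (by omega)).ne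

lemma FF_base {q B C D : ℂ} (hq : ‖q‖ < 1) (hB : Ok q B) (hC : Ok q C) (hD : Ok q D)
    (hz : ‖q ^ 2 * B * C * D‖ < 1) (hz' : ‖q ^ 2 * B * C‖ < 1) : FF q B C D := by
  have h1 := S_inf hq hB hC hD hz
  have h2 := S_inf hq hB hC (Ok_one hq) (by simpa using hz')
  rw [S_one] at h2
  simp only [mul_one] at h2
  unfold FF
  linear_combination qPochInf (q ^ 2 * B) q * qPochInf (q ^ 2 * C) q * h1 -
    qPochInf (q ^ 2 * B * D) q * qPochInf (q ^ 2 * C * D) q * h2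

lemma FF_step {q B C D : ℂ} (hq : ‖q‖ < 1) (hB : Ok q B) (hC : Ok q C) (hD : Ok q D)
    (hz : ‖q ^ 2 * B * C * D‖ < 1) (h : FF q B C (q * D)) : FF q B C D := by
  have r := rec_S hq hB hC hD hz
  unfold FF at *
  rw [inf_rec (q ^ 2 * D) q hq, inf_rec (q ^ 2 * B * C * D) q hq, inf_rec (q ^ 2 * B * D) q hq,
    inf_rec (q ^ 2 * C * D) q hq]
  rw [show q ^ 2 * (q * D) = q ^ 2 * D * q by ring,
    show q ^ 2 * B * C * (q * D) = q ^ 2 * B * C * D * q by ring,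
    show q ^ 2 * B * (q * D) = q ^ 2 * B * D * q by ring,
    show q ^ 2 * C * (q * D) = q ^ 2 * C * D * q by ring] at h
  linear_combination (1 - q ^ 2 * B * D) * (1 - q ^ 2 * C * D) * h +
    qPochInf (q ^ 2 * B) q * qPochInf (q ^ 2 * C) q * qPochInf (q ^ 2 * D * q) q *
    qPochInf (q ^ 2 * B * C * D * q) q * r

lemma FF_all {q B C D : ℂ} (hq : ‖q‖ < 1) (hB : Ok q B) (hC : Ok q C) (hD : Ok q D)
    (hz : ‖q ^ 2 * B * C * D‖ < 1) : FF q B C D := by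
  have hlt : ∀ N : ℕ, ‖q ^ 2 * D * C * (q ^ N * B)‖ < 1 := by
    intro N
    rw [show q ^ 2 * D * C * (q ^ N * B) = q ^ N * (q ^ 2 * B * C * D) by ring, norm_mul, norm_pow]
    have := pow_le_one₀ (n := N) (norm_nonneg q) hq.le
    have h3 : 0 ≤ ‖q‖ ^ N := by positivity
    nlinarith [norm_nonneg (q ^ 2 * B * C * D)]
  have step : ∀ N : ℕ, FF q D C (q ^ N * B) → FF q D C B := by
    intro N
    induction N with
    | zero => simp
    | succ N ih =>
      intro h
      apply ih
      apply FF_step hq hD hC (hB.mulN N) (hlt N)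
      rwa [show q * (q ^ N * B) = q ^ (N + 1) * B by ring]
  have t : Tendsto (fun N : ℕ => ‖q ^ N * (q ^ 2 * B * C)‖) atTop (𝓝 0) := by
    have := ((pow_tend hq).mul_const (q ^ 2 * B * C)).norm
    rwa [zero_mul, norm_zero] at this
  obtain ⟨N, hN⟩ := (t.eventually (gt_mem_nhds one_pos)).exists
  refine FF_symm (step N (FF_symm (FF_base hq (hB.mulN N) hC hD ?_ ?_)))
  · rw [show q ^ 2 * (q ^ N * B) * C * D = q ^ 2 * D * C * (q ^ N * B) by ring]; exact hlt N
  · rw [show q ^ 2 * (q ^ N * B) * C = q ^ N * (q ^ 2 * B * C) by ring]; exact hN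

lemma Int_rec {a q : ℂ} (hq0 : q ≠ 0) (hq : ‖q‖ < 1) (ha : ∀ m : ℤ, 1 - a * q ^ m ≠ 0) (k : ℤ) :
    qPochInt a q (k + 1) = qPochInt a q k * (1 - a * q ^ k) := by
  unfold qPochInt
  rw [inf_rec (a * q ^ k) q hq, mul_assoc a, ← zpow_add_one₀ hq0]
  have h1 := ha k
  field_simp

lemma Int_ne {a q : ℂ} (hq0 : q ≠ 0) (hq : ‖q‖ < 1) (ha : ∀ m : ℤ, 1 - a * q ^ m ≠ 0) (k : ℤ) :
    qPochInt a q k ≠ 0 := by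
  refine div_ne_zero (inf_ne _ _ hq fun i => ?_) (inf_ne _ _ hq fun i => ?_)
  · simpa using ha i
  · have := ha (k + i)
    rwa [zpow_add₀ hq0, ← mul_assoc, zpow_natCast] at this

lemma Int_zero {a q : ℂ} (hq : ‖q‖ < 1) (ha : ∀ m : ℤ, 1 - a * q ^ m ≠ 0) :
    qPochInt a q 0 = 1 := by
  unfold qPochInt
  rw [zpow_zero, mul_one]
  exact div_self (inf_ne _ _ hq fun i => by simpa using ha i)

lemma final_aux (q σ ρ γ : ℂ)
    (hq0 : 0 < ‖q‖) (hq1 : ‖q‖ < 1)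
    (hconv : ‖q ^ 2‖ < ‖σ * ρ * γ‖)
    (h : ∀ m : ℤ, σ ≠ q ^ m ∧ ρ ≠ q ^ m ∧ γ ≠ q ^ m ∧ σ * ρ * γ ≠ q ^ m) :
    HasSum (fun k : ℤ => (q ^ 2 / (σ * ρ * γ)) ^ k *
        (qPochInt σ q k * qPochInt ρ q k * qPochInt γ q k) /
        (qPochInt (q ^ 2 / σ) q k * qPochInt (q ^ 2 / ρ) q k * qPochInt (q ^ 2 / γ) q k))
      (∑' k, uu q σ⁻¹ ρ⁻¹ γ⁻¹ k) := by
  have hq : q ≠ 0 := norm_pos_iff.mp hq0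
  have hp : σ * ρ * γ ≠ 0 := norm_pos_iff.mp (lt_of_le_of_lt (norm_nonneg _) hconv)
  have hσ : σ ≠ 0 := by rintro rfl; simp at hp
  have hρ : ρ ≠ 0 := by rintro rfl; simp at hp
  have hγ : γ ≠ 0 := by rintro rfl; simp at hp
  have nz1 : ∀ a : ℂ, (∀ m : ℤ, a ≠ q ^ m) → ∀ m : ℤ, 1 - a * q ^ m ≠ 0 := by
    intro a ha m h2
    apply ha (-m)
    rw [zpow_neg]
    exact eq_inv_of_mul_eq_one_left (by linear_combination -h2)
  have nz2 : ∀ a : ℂ, a ≠ 0 → (∀ m : ℤ, a ≠ q ^ m) → ∀ m : ℤ, 1 - q ^ 2 / a * q ^ m ≠ 0 := by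
    intro a ha0 ha m h2
    apply ha (2 + m)
    rw [zpow_add₀ hq, show q ^ (2:ℤ) = q ^ 2 by norm_cast]
    field_simp at h2
    linear_combination h2
  have s1 := nz1 σ fun m => (h m).1
  have s2 := nz2 σ hσ fun m => (h m).1
  have r1 := nz1 ρ fun m => (h m).2.1
  have r2 := nz2 ρ hρ fun m => (h m).2.1
  have g1 := nz1 γ fun m => (h m).2.2.1
  have g2 := nz2 γ hγ fun m => (h m).2.2.1
  set t : ℤ → ℂ := fun k : ℤ => (q ^ 2 / (σ * ρ * γ)) ^ k *
        (qPochInt σ q k * qPochInt ρ q k * qPochInt γ q k) /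
        (qPochInt (q ^ 2 / σ) q k * qPochInt (q ^ 2 / ρ) q k * qPochInt (q ^ 2 / γ) q k) with ht
  have hz0 : q ^ 2 / (σ * ρ * γ) ≠ 0 := div_ne_zero (pow_ne_zero _ hq) hp
  have t0 : t 0 = 1 := by
    simp only [ht]
    rw [Int_zero hq1 s1, Int_zero hq1 s2, Int_zero hq1 r1, Int_zero hq1 r2, Int_zero hq1 g1,
      Int_zero hq1 g2]
    simp
  have trec : ∀ k : ℤ, t (k + 1) = t k * (q ^ 2 / (σ * ρ * γ) *
      ((1 - σ * q ^ k) * (1 - ρ * q ^ k) * (1 - γ * q ^ k)) /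
      ((1 - q ^ 2 / σ * q ^ k) * (1 - q ^ 2 / ρ * q ^ k) * (1 - q ^ 2 / γ * q ^ k))) := by
    intro k
    simp only [ht]
    rw [Int_rec hq hq1 s1, Int_rec hq hq1 s2, Int_rec hq hq1 r1, Int_rec hq hq1 r2,
      Int_rec hq hq1 g1, Int_rec hq hq1 g2, zpow_add_one₀ hz0]
    simp only [div_eq_mul_inv, mul_inv]
    ring
  have refl : ∀ k : ℕ, t (-((k:ℤ) + 1)) = - (q * (q ^ k) ^ 2) * t k := by
    intro k
    induction k with
    | zero =>
      have := trec (-1)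
      have a1 := s2 (-1)
      have a2 := r2 (-1)
      have a3 := g2 (-1)
      have b1 := s1 (-1)
      have b2 := r1 (-1)
      have b3 := g1 (-1)
      simp only [neg_add_cancel, t0] at this
      simp only [Nat.cast_zero, zero_add, t0]
      rw [zpow_neg_one] at *
      have e : ∀ a : ℂ, a ≠ 0 → 1 - a * q⁻¹ = -(a / q) * (1 - q ^ 2 / a * q⁻¹) := by
        intro a ha
        field_simp
        ring
      rw [e σ hσ, e ρ hρ, e γ hγ] at this
      generalize 1 - q ^ 2 / σ * q⁻¹ = X at *
      generalize 1 - q ^ 2 / ρ * q⁻¹ = Y at *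
      generalize 1 - q ^ 2 / γ * q⁻¹ = Z at *
      field_simp at this
      simp only [Nat.cast_zero, pow_zero, one_pow, mul_one]
      linear_combination this
    | succ k ih =>
      have A := trec (-((k:ℤ) + 1 + 1))
      have Bk := trec k
      rw [show -((k:ℤ) + 1 + 1) + 1 = -((k:ℤ) + 1) by ring, ih] at A
      push_cast
      rw [Bk]
      have e1 : ∀ a : ℂ, a ≠ 0 → 1 - a * q ^ (-((k:ℤ) + 1 + 1)) =
          -(a / (q ^ 2 * q ^ (k:ℤ))) * (1 - q ^ 2 / a * q ^ (k:ℤ)) := by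
        intro a ha
        rw [zpow_neg, zpow_add_one₀ hq, zpow_add_one₀ hq]
        have : q ^ (k:ℤ) ≠ 0 := zpow_ne_zero _ hq
        field_simp
        ring
      have e2 : ∀ a : ℂ, a ≠ 0 → 1 - q ^ 2 / a * q ^ (-((k:ℤ) + 1 + 1)) =
          -(1 / (a * q ^ (k:ℤ))) * (1 - a * q ^ (k:ℤ)) := by
        intro a ha
        rw [zpow_neg, zpow_add_one₀ hq, zpow_add_one₀ hq]
        have : q ^ (k:ℤ) ≠ 0 := zpow_ne_zero _ hq
        field_simp
        ring
      rw [e1 σ hσ, e1 ρ hρ, e1 γ hγ, e2 σ hσ, e2 ρ hρ, e2 γ hγ] at A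
      have a1 := s2 k
      have a2 := r2 k
      have a3 := g2 k
      have b1 := s1 k
      have b2 := r1 k
      have b3 := g1 k
      have hx : q ^ (k:ℤ) ≠ 0 := zpow_ne_zero _ hq
      rw [pow_succ q k]
      rw [← zpow_natCast q k] at *
      generalize t (-((k:ℤ) + 1 + 1)) = V at *
      generalize t k = U at *
      generalize 1 - q ^ 2 / σ * q ^ (k:ℤ) = X at *
      generalize 1 - q ^ 2 / ρ * q ^ (k:ℤ) = Y at *
      generalize 1 - q ^ 2 / γ * q ^ (k:ℤ) = Z at *
      generalize 1 - σ * q ^ (k:ℤ) = X' at *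
      generalize 1 - ρ * q ^ (k:ℤ) = Y' at *
      generalize 1 - γ * q ^ (k:ℤ) = Z' at *
      generalize q ^ (k:ℤ) = x at *
      field_simp at A
      field_simp
      linear_combination -A
  have tu : ∀ k : ℕ, (1 - q * (q ^ k) ^ 2) * t k = uu q σ⁻¹ ρ⁻¹ γ⁻¹ k := by
    intro k
    unfold uu
    congr 1
    induction k with
    | zero => simp [t0]
    | succ k ih =>
      rw [Finset.prod_range_succ, ← ih, Nat.cast_succ, trec, zpow_natCast]
      congr 1
      have e : ∀ a : ℂ, a ≠ 0 → a⁻¹ - q ^ k = a⁻¹ * (1 - a * q ^ k) := by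
        intro a ha; field_simp
      rw [e σ hσ, e ρ hρ, e γ hγ]
      simp only [div_eq_mul_inv, mul_inv]
      ring
  have okk : ∀ a : ℂ, a ≠ 0 → (∀ m : ℤ, a ≠ q ^ m) → Ok q a⁻¹ := by
    intro a ha0 ha i h2
    apply ha (i + 1 : ℕ)
    rw [zpow_natCast]
    field_simp at h2
    linear_combination h2
  -- summability on ℕ
  have hz : ‖q ^ 2 / (σ * ρ * γ)‖ < 1 := by
    rw [norm_div, div_lt_one (norm_pos_iff.mpr hp)]; exact hconv
  have ts : Summable (fun k : ℕ => t k) := by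
    refine aux_ratio _ _ _ hz (fun k => by rw [Nat.cast_succ]; exact trec k) ?_
    have := comp_tend hq1 (fun x => q ^ 2 / (σ * ρ * γ) *
      ((1 - σ * x) * (1 - ρ * x) * (1 - γ * x)) /
      ((1 - q ^ 2 / σ * x) * (1 - q ^ 2 / ρ * x) * (1 - q ^ 2 / γ * x)))
      (ContinuousAt.div (by fun_prop) (by fun_prop) (by simp))
    simpa using this
  have ts2 : Summable (fun k : ℕ => t (-((k:ℤ) + 1))) := by
    simp_rw [refl]
    have : Summable (fun k : ℕ => t k * (-(q * (q ^ k) ^ 2))) := by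
      refine Summable.mul_tendsto_const (c := -(q * 0 ^ 2)) ts.norm ?_
      rw [Nat.cofinite_eq_atTop]
      exact comp_tend hq1 (fun x => -(q * x ^ 2)) (by fun_prop)
    simpa only [mul_comm] using this
  have := HasSum.of_nat_of_neg_add_one ts.hasSum ts2.hasSum
  rw [← ts.tsum_add ts2] at this
  convert this using 3 with k
  rw [refl, ← tu]
  ring

/-- a new bilateral summation formula (the `δ = 1` case). -/
theorem new_bilateral_sum_delta_one (q σ ρ γ : ℂ)
    (hq0 : 0 < ‖q‖) (hq1 : ‖q‖ < 1)
    (hconv : ‖q ^ 2‖ < ‖σ * ρ * γ‖)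
    (h : ∀ m : ℤ, σ ≠ q ^ m ∧ ρ ≠ q ^ m ∧ γ ≠ q ^ m ∧ σ * ρ * γ ≠ q ^ m) :
    Summable (fun k : ℤ => (q ^ 2 / (σ * ρ * γ)) ^ k *
        (qPochInt σ q k * qPochInt ρ q k * qPochInt γ q k) /
        (qPochInt (q ^ 2 / σ) q k * qPochInt (q ^ 2 / ρ) q k * qPochInt (q ^ 2 / γ) q k)) ∧
    (1 / (1 - q)) * ∑' k : ℤ, (q ^ 2 / (σ * ρ * γ)) ^ k *
        (qPochInt σ q k * qPochInt ρ q k * qPochInt γ q k) /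
        (qPochInt (q ^ 2 / σ) q k * qPochInt (q ^ 2 / ρ) q k * qPochInt (q ^ 2 / γ) q k)
    = qPochInf (q ^ 2) q * qPochInf (q ^ 2 / (σ * ρ)) q * qPochInf (q ^ 2 / (σ * γ)) q *
        qPochInf (q ^ 2 / (ρ * γ)) q /
      (qPochInf (q ^ 2 / σ) q * qPochInf (q ^ 2 / ρ) q * qPochInf (q ^ 2 / γ) q *
        qPochInf (q ^ 2 / (σ * ρ * γ)) q) := by
  have hs := final_aux q σ ρ γ hq0 hq1 hconv h
  refine ⟨hs.summable, ?_⟩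
  rw [hs.tsum_eq]
  have hq : q ≠ 0 := norm_pos_iff.mp hq0
  have hp : σ * ρ * γ ≠ 0 := norm_pos_iff.mp (lt_of_le_of_lt (norm_nonneg _) hconv)
  have hσ : σ ≠ 0 := by rintro rfl; simp at hp
  have hρ : ρ ≠ 0 := by rintro rfl; simp at hp
  have hγ : γ ≠ 0 := by rintro rfl; simp at hp
  have okk : ∀ a : ℂ, a ≠ 0 → (∀ m : ℤ, a ≠ q ^ m) → Ok q a⁻¹ := by
    intro a ha0 ha i h2
    apply ha (i + 1 : ℕ)
    rw [zpow_natCast]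
    field_simp at h2
    linear_combination h2
  have o1 := okk σ hσ fun m => (h m).1
  have o2 := okk ρ hρ fun m => (h m).2.1
  have o3 := okk γ hγ fun m => (h m).2.2.1
  have o4 := okk _ hp fun m => (h m).2.2.2
  have hz : ‖q ^ 2 / (σ * ρ * γ)‖ < 1 := by
    rw [norm_div, div_lt_one (norm_pos_iff.mpr hp)]; exact hconv
  have e : q ^ 2 / (σ * ρ * γ) = q ^ 2 * σ⁻¹ * ρ⁻¹ * γ⁻¹ := by field_simp
  have e' : q ^ 2 * (σ * ρ * γ)⁻¹ = q ^ 2 * σ⁻¹ * ρ⁻¹ * γ⁻¹ := by field_simp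
  have main := FF_all hq1 o1 o2 o3 (by rw [← e]; exact hz)
  unfold FF at main
  have n1 := inf_ne _ q hq1 o1.two
  have n2 := inf_ne _ q hq1 o2.two
  have n3 := inf_ne _ q hq1 o3.two
  have n4 := inf_ne _ q hq1 o4.two
  rw [e'] at n4
  have hq1' : 1 - q ≠ 0 := by
    have := Ok_one hq1 0
    simpa using this
  rw [e, div_eq_mul_inv _ σ, div_eq_mul_inv _ ρ, div_eq_mul_inv _ γ,
    show q ^ 2 / (σ * ρ) = q ^ 2 * σ⁻¹ * ρ⁻¹ by field_simp,
    show q ^ 2 / (σ * γ) = q ^ 2 * σ⁻¹ * γ⁻¹ by field_simp,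
    show q ^ 2 / (ρ * γ) = q ^ 2 * ρ⁻¹ * γ⁻¹ by field_simp]
  rw [eq_div_iff (mul_ne_zero (mul_ne_zero (mul_ne_zero n1 n2) n3) n4), one_div]
  rw [mul_assoc, inv_mul_eq_iff_eq_mul₀ hq1']
  linear_combination main
end
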